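/- arXiv:2105.07247 — 2 statements merged into one kernel-verified Lean document; each statement's English description precedes it below -/
import Mathlib

section
/- Let G be a finite group and N a normal subgroup with Q = G/N cyclic. Let U be a set of representatives of the Q̂-orbits on Irr G. Then every character Θ of G (i.e. every character of a finite-dimensional complex representation of G) can be written as Θ = Σ_{ρ ∈ U} Ψ_ρ ⊗ ρ, where each Ψ_ρ is either zero or a character of G with N contained in the kernel of the associated representation, and ⊗ denotes the pointwise product of class functions. -/
open scoped BigOperators

/-- `ρ : G → ℂ` is the character of an irreducible (simple) finite-dimensional
complex representation of `G`. -/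
def IsIrrChar (G : Type) [Group G] (ρ : G → ℂ) : Prop :=
  ∃ V : FDRep ℂ G, CategoryTheory.Simple V ∧ ρ = V.character

/-- `Θ : G → ℂ` is the character of some finite-dimensional complex representation of `G`. -/
def IsChar (G : Type) [Group G] (Θ : G → ℂ) : Prop :=
  ∃ V : FDRep ℂ G, Θ = V.character

variable {G : Type} [Group G]

/-- The action of a character `χ ∈ Q̂` (where `Q = G ⧸ N`) on a function `ρ : G → ℂ`:
`(χ · ρ)(g) = χ(gN) · ρ(g)`. -/
def charMul (N : Subgroup G) [N.Normal] (χ : (G ⧸ N) →* ℂˣ) (ρ : G → ℂ) : G → ℂ :=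
  fun g => (χ (g : G ⧸ N) : ℂ) * ρ g

/-- The orbit of `ρ` under the tensoring action of `Q̂ = Hom(G ⧸ N, ℂˣ)`. -/
def qhatOrbit (N : Subgroup G) [N.Normal] (ρ : G → ℂ) : Set (G → ℂ) :=
  {ρ' | ∃ χ : (G ⧸ N) →* ℂˣ, ρ' = charMul N χ ρ}

/-- The coset `qN`, as a subset of `G`. -/
def coset (N : Subgroup G) [N.Normal] (q : G) : Set G :=
  {g | (g : G ⧸ N) = (q : G ⧸ N)}

/-- `C_q`: the set of conjugacy classes of `G` contained in the coset `qN`. -/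
def Cset (N : Subgroup G) [N.Normal] (q : G) : Set (ConjClasses G) :=
  {c | c.carrier ⊆ coset N q}

/-- `R_q`: the set of `Q̂`-orbits on the irreducible characters of `G`
containing a character not identically zero on `qN`. -/
def Rset (N : Subgroup G) [N.Normal] (q : G) : Set (Set (G → ℂ)) :=
  {S | (∃ ρ, IsIrrChar G ρ ∧ S = qhatOrbit N ρ) ∧ ∃ ρ' ∈ S, ∃ g ∈ coset N q, ρ' g ≠ 0}

/-- The class function `π_x` for `x ∈ Q = G ⧸ N`:
`π_x(g) = (1/#Q̂) ∑_{χ ∈ Q̂} conj(χ(x)) χ(gN)`. -/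
noncomputable def piQ (N : Subgroup G) [N.Normal] (x : G ⧸ N) : G → ℂ :=
  fun g => (Nat.card ((G ⧸ N) →* ℂˣ) : ℂ)⁻¹ *
    ∑ᶠ χ : (G ⧸ N) →* ℂˣ, (starRingEnd ℂ) (χ x : ℂ) * (χ (g : G ⧸ N) : ℂ)

/-- The space of class functions on `G`, as a submodule of `G → ℂ`. -/
noncomputable def classFunSubmodule (G : Type) [Group G] : Submodule ℂ (G → ℂ) where
  carrier := {f | ∀ g h : G, f (h * g * h⁻¹) = f g}
  add_mem' := by intro a b ha hb g h; simp only [Pi.add_apply, ha g h, hb g h]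
  zero_mem' := by intro g h; rfl
  smul_mem' := by intro c f hf g h; simp only [Pi.smul_apply, hf g h]

/-- The space of class functions on `G` vanishing outside the coset `qN`. -/
noncomputable def cosetClassFun (N : Subgroup G) [N.Normal] (q : G) : Submodule ℂ (G → ℂ) where
  carrier := {f | (∀ g h : G, f (h * g * h⁻¹) = f g) ∧ ∀ g, g ∉ coset N q → f g = 0}
  add_mem' := by
    intro a b ha hb
    exact ⟨fun g h => by simp only [Pi.add_apply, ha.1 g h, hb.1 g h],
      fun g hg => by simp only [Pi.add_apply, ha.2 g hg, hb.2 g hg, add_zero]⟩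
  zero_mem' := ⟨fun g h => rfl, fun g hg => rfl⟩
  smul_mem' := by
    intro c f hf
    exact ⟨fun g h => by simp only [Pi.smul_apply, hf.1 g h],
      fun g hg => by simp only [Pi.smul_apply, hf.2 g hg, smul_zero]⟩


/-- Helper: character of a representation trivial on N. -/
def TrivChar (N : Subgroup G) (f : G → ℂ) : Prop :=
  ∃ W : FDRep ℂ G, f = W.character ∧ ∀ n ∈ N, W.ρ n = 1

/-- Helper: decomposability with finite support. -/
def Decomp (N : Subgroup G) (U : Set (G → ℂ)) (Θ : G → ℂ) : Prop :=
  ∃ Ψ : (G → ℂ) → (G → ℂ), (Function.support Ψ).Finite ∧ (∀ ρ, TrivChar N (Ψ ρ)) ∧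
    ∀ g : G, Θ g = ∑ᶠ ρ ∈ U, Ψ ρ g * ρ g

lemma trivChar_zero (N : Subgroup G) : TrivChar N (0 : G → ℂ) := by
  refine ⟨FDRep.of (1 : Representation ℂ G PUnit), ?_, fun n _ => rfl⟩
  ext g
  change 0 = LinearMap.trace ℂ PUnit _
  rw [Subsingleton.elim ((FDRep.of (1 : Representation ℂ G PUnit)).ρ g) (0 : PUnit →ₗ[ℂ] PUnit)]
  exact (map_zero _).symm

lemma trivChar_add (N : Subgroup G) {f f' : G → ℂ} (h : TrivChar N f) (h' : TrivChar N f') :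
    TrivChar N (f + f') := by
  obtain ⟨W, rfl, hW⟩ := h
  obtain ⟨W', rfl, hW'⟩ := h'
  refine ⟨FDRep.of (Representation.prod W.ρ W'.ρ), ?_, fun n hn => ?_⟩
  · ext g
    exact (LinearMap.trace_prodMap' (R := ℂ) (W.ρ g) (W'.ρ g)).symm
  · change LinearMap.prodMap (W.ρ n) (W'.ρ n) = 1
    rw [hW n hn, hW' n hn]
    rfl

lemma trivChar_chi (N : Subgroup G) [N.Normal] (χ : (G ⧸ N) →* ℂˣ) :
    TrivChar N (fun g => (χ (g : G ⧸ N) : ℂ)) := by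
  let r : Representation ℂ G ℂ :=
    { toFun := fun g => (χ (g : G ⧸ N) : ℂ) • LinearMap.id
      map_one' := by simp; rfl
      map_mul' := fun a b => by ext; simp [mul_comm] }
  refine ⟨FDRep.of r, ?_, fun n hn => ?_⟩
  · ext g
    change _ = LinearMap.trace ℂ ℂ ((χ (g : G ⧸ N) : ℂ) • LinearMap.id)
    simp
  · change (χ (n : G ⧸ N) : ℂ) • LinearMap.id = 1
    rw [(QuotientGroup.eq_one_iff n).2 hn]
    simp
    rfl

lemma decomp_zero (N : Subgroup G) (U : Set (G → ℂ)) : Decomp N U 0 :=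
  ⟨0, by simp, fun _ => trivChar_zero N, fun g => by simp⟩

lemma decomp_add (N : Subgroup G) (U : Set (G → ℂ)) {f f' : G → ℂ} (h : Decomp N U f)
    (h' : Decomp N U f') : Decomp N U (f + f') := by
  obtain ⟨A, hA, hA1, hA2⟩ := h
  obtain ⟨B, hB, hB1, hB2⟩ := h'
  refine ⟨A + B, (hA.union hB).subset (Function.support_add A B),
    fun ρ => trivChar_add N (hA1 ρ) (hB1 ρ), fun g => ?_⟩
  rw [Pi.add_apply, hA2, hB2, ← finsum_mem_add_distrib']
  · simp [add_mul]
  · refine hA.subset fun ρ hρ => ?_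
    rintro h0
    exact hρ.2 (by simp [h0])
  · refine hB.subset fun ρ hρ => ?_
    rintro h0
    exact hρ.2 (by simp [h0])

lemma decomp_irr (N : Subgroup G) [N.Normal] (U : Set (G → ℂ))
    (hU3 : ∀ ρ : G → ℂ, IsIrrChar G ρ → ∃ ρ' ∈ U, ρ ∈ qhatOrbit N ρ')
    {f : G → ℂ} (h : IsIrrChar G f) : Decomp N U f := by
  classical
  obtain ⟨ρ, hρ, χ, rfl⟩ := hU3 f h
  refine ⟨Pi.single ρ (fun g => (χ (g : G ⧸ N) : ℂ)),
    (Set.finite_singleton ρ).subset Pi.support_single_subset, fun σ => ?_, fun g => ?_⟩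
  · by_cases hσ : σ = ρ
    · subst hσ
      simpa using trivChar_chi N χ
    · simpa [hσ] using trivChar_zero N
  · rw [finsum_eq_single _ ρ]
    · simp [charMul, hρ]
    · intro σ hσ
      simp [hσ]

lemma irr_of_irreducible [Fintype G] {V : Type} [AddCommGroup V] [Module ℂ V]
    [FiniteDimensional ℂ V] (r : Representation ℂ G V) (hr : r.IsIrreducible) :
    IsIrrChar G r.character := by
  refine ⟨FDRep.of r, ?_, rfl⟩
  rw [FDRep.simple_iff_char_is_norm_one]
  have := invertibleOfNonzero (NeZero.ne (Nat.card G : ℂ))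
  have h := Representation.char_orthonormal r r
  rw [if_pos ⟨Representation.Equiv.refl r⟩] at h
  change ∑ g : G, r.character g * r.character g⁻¹ = _
  rwa [inv_mul_eq_one₀ (NeZero.ne (Nat.card G : ℂ)), eq_comm] at h

lemma char_compl {V : Type} [AddCommGroup V] [Module ℂ V]
    [FiniteDimensional ℂ V] (r : Representation ℂ G V) (p q : Subrepresentation r)
    (h : IsCompl p.toSubmodule q.toSubmodule) :
    r.character = p.toRepresentation.character + q.toRepresentation.character := by
  ext g
  have h1 : r g = (Submodule.prodEquivOfIsCompl _ _ h).conj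
      (LinearMap.prodMap (p.toRepresentation g) (q.toRepresentation g)) := by
    ext x
    obtain ⟨⟨a, b⟩, rfl⟩ := (Submodule.prodEquivOfIsCompl _ _ h).surjective x
    rw [LinearEquiv.conj_apply_apply, LinearEquiv.symm_apply_apply]
    exact map_add (r g) (a : V) (b : V)
  change LinearMap.trace ℂ V (r g) = _
  rw [h1, LinearMap.trace_conj', LinearMap.trace_prodMap']
  rfl

lemma decomp_rep [Fintype G] (N : Subgroup G) [N.Normal] (U : Set (G → ℂ))
    (hU3 : ∀ ρ : G → ℂ, IsIrrChar G ρ → ∃ ρ' ∈ U, ρ ∈ qhatOrbit N ρ') (n : ℕ) :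
    ∀ (V : Type) [AddCommGroup V] [Module ℂ V] [FiniteDimensional ℂ V]
      (r : Representation ℂ G V), Module.finrank ℂ V = n → Decomp N U r.character := by
  induction n using Nat.strong_induction_on with
  | _ n ih =>
  intro V _ _ _ r hn
  by_cases hirr : r.IsIrreducible
  · exact decomp_irr N U hU3 (irr_of_irreducible r hirr)
  by_cases hs : Subsingleton V
  · convert decomp_zero N U
    ext g
    change LinearMap.trace ℂ V (r g) = 0
    rw [Subsingleton.elim (r g) 0, map_zero]
  rw [not_subsingleton_iff_nontrivial] at hs
  have hbt : (⊥ : Subrepresentation r) ≠ ⊤ := by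
    intro h
    exact bot_ne_top (congrArg Subrepresentation.toSubmodule h)
  have : Nontrivial (Subrepresentation r) := ⟨⊥, ⊤, hbt⟩
  obtain ⟨p, hp0, hp1⟩ : ∃ p : Subrepresentation r, p ≠ ⊥ ∧ p ≠ ⊤ := by
    by_contra! hc
    exact hirr ⟨fun a => or_iff_not_imp_left.2 (hc a)⟩
  obtain ⟨q, hpq⟩ := exists_isCompl p
  have hc : IsCompl p.toSubmodule q.toSubmodule := by
    refine IsCompl.of_eq ?_ ?_
    · exact congrArg Subrepresentation.toSubmodule hpq.inf_eq_bot
    · exact congrArg Subrepresentation.toSubmodule hpq.sup_eq_top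
  have hd := Submodule.finrank_add_eq_of_isCompl hc
  have h0 : Module.finrank ℂ p.toSubmodule ≠ 0 := by
    intro h
    exact hp0 (Subrepresentation.toSubmodule_injective (Submodule.finrank_eq_zero.1 h))
  have h1 : Module.finrank ℂ p.toSubmodule < Module.finrank ℂ V :=
    Submodule.finrank_lt (fun h => hp1 (Subrepresentation.toSubmodule_injective h))
  rw [char_compl r p q hc]
  exact decomp_add N U (ih _ (by omega) _ _ rfl) (ih _ (by omega) _ _ rfl)

/-- For `G ⧸ N` cyclic and `U` a set of representatives of the
`Q̂`-orbits on `Irr G`, every character `Θ` of `G` can be written as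
`Θ = ∑_{ρ ∈ U} Ψ_ρ ⊗ ρ` with each `Ψ_ρ` zero or a character of `G` trivial on `N`. -/
theorem character_decomposition
    (G : Type) [Group G] [Fintype G] (N : Subgroup G) [N.Normal]
    (hcyc : IsCyclic (G ⧸ N))
    (U : Set (G → ℂ))
    (hU1 : ∀ ρ ∈ U, IsIrrChar G ρ)
    (hU2 : ∀ ρ ∈ U, ∀ ρ' ∈ U, qhatOrbit N ρ = qhatOrbit N ρ' → ρ = ρ')
    (hU3 : ∀ ρ : G → ℂ, IsIrrChar G ρ → ∃ ρ' ∈ U, ρ ∈ qhatOrbit N ρ')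
    (Θ : G → ℂ) (hΘ : IsChar G Θ) :
    ∃ Ψ : (G → ℂ) → (G → ℂ),
      (∀ ρ ∈ U, Ψ ρ = 0 ∨
        ∃ W : FDRep ℂ G, Ψ ρ = W.character ∧ ∀ n ∈ N, W.ρ n = 1) ∧
      ∀ g : G, Θ g = ∑ᶠ ρ ∈ U, Ψ ρ g * ρ g := by
  obtain ⟨V, rfl⟩ := hΘ
  obtain ⟨Ψ, -, h1, h2⟩ := decomp_rep N U hU3 _ V V.ρ rfl
  exact ⟨Ψ, fun ρ _ => Or.inr (h1 ρ), h2⟩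
end

section
/- Let G be a finite group, N a normal subgroup with Q = G/N cyclic generated by the coset of q ∈ G, and U a set of representatives of the Q̂-orbits on Irr G. For ρ ∈ U set m_ρ = ⟨Res_N ρ, Res_N ρ⟩. Suppose Θ is a character of G written as Θ = Σ_{ρ∈U} Ψ_ρ ⊗ ρ with each Ψ_ρ a character (or zero) of G trivial on N. Then for every ρ ∈ U and every integer d ≥ 0, Ψ_ρ(q^{d·m_ρ}) = (1/(#N · m_ρ)) Σ_{g ∈ q^{d·m_ρ}N} conj(ρ(g)) · Θ(g). -/
open scoped BigOperators

variable {G : Type} [Group G]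

open CategoryTheory

lemma aux_mat_conj {G : Type} [Group G] [Fintype G] {n : Type} [Fintype n] [DecidableEq n]
    (M : G →* Matrix n n ℂ) (g : G) :
    (starRingEnd ℂ) (M g).trace = (M g⁻¹).trace := by
  classical
  open scoped ComplexOrder Matrix in
  let H : Matrix n n ℂ := ∑ h : G, (M h)ᴴ * M h
  have hpos : H.PosDef := by
    have : H = 1 + ∑ h ∈ Finset.univ.erase (1 : G), (M h)ᴴ * M h := by
      simp only [H]
      rw [← Finset.add_sum_erase _ _ (Finset.mem_univ (1 : G))]
      simp
    rw [this]
    refine Matrix.PosDef.one.add_posSemidef ?_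
    exact Matrix.posSemidef_sum _ (fun i _ => Matrix.posSemidef_conjTranspose_mul_self _)
  have hdet : IsUnit H.det := (Matrix.isUnit_iff_isUnit_det _).1 hpos.isUnit
  have hinv : (M g)ᴴ * H * M g = H := by
    simp only [H, Finset.mul_sum, Finset.sum_mul]
    rw [← Equiv.sum_comp (Equiv.mulRight g) (fun h => (M h)ᴴ * M h)]
    refine Finset.sum_congr rfl fun h _ => ?_
    simp [Matrix.conjTranspose_mul, Matrix.mul_assoc]
  have h2 : (M g)ᴴ * H = H * M g⁻¹ := by
    calc (M g)ᴴ * H = (M g)ᴴ * H * (M g * M g⁻¹) := by rw [← map_mul]; simp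
      _ = _ := by rw [← Matrix.mul_assoc, hinv]
  have h3 : (M g)ᴴ = H * M g⁻¹ * H⁻¹ := by
    rw [← h2, Matrix.mul_nonsing_inv_cancel_right _ _ hdet]
  have h4 : ((M g)ᴴ).trace = (M g⁻¹).trace := by
    rw [h3, Matrix.trace_mul_comm, Matrix.nonsing_inv_mul_cancel_left _ _ hdet]
  rw [← h4, Matrix.trace_conjTranspose]
  rfl

lemma aux_char_conj {G : Type} [Group G] [Fintype G] (V : FDRep ℂ G) (g : G) :
    (starRingEnd ℂ) (V.character g) = V.character g⁻¹ := by
  let b := Module.finBasis ℂ V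
  let M : G →* Matrix _ _ ℂ :=
    (LinearMap.toMatrixAlgEquiv b).toMulEquiv.toMonoidHom.comp V.ρ
  have h : ∀ g, V.character g = (M g).trace := fun g =>
    LinearMap.trace_eq_matrix_trace ℂ b (V.ρ g)
  rw [h, h, aux_mat_conj]

lemma aux_irr_conj {G : Type} [Group G] [Fintype G] {ρ : G → ℂ} (h : IsIrrChar G ρ) (g : G) :
    (starRingEnd ℂ) (ρ g) = ρ g⁻¹ := by
  obtain ⟨V, _, rfl⟩ := h
  exact aux_char_conj V g

open scoped Classical in
lemma aux_orth {G : Type} [Group G] [Fintype G] {ρ ρ' : G → ℂ} (h : IsIrrChar G ρ)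
    (h' : IsIrrChar G ρ') :
    ∑ g, ρ g * (starRingEnd ℂ) (ρ' g) = if ρ = ρ' then (Nat.card G : ℂ) else 0 := by
  simp_rw [aux_irr_conj h']
  obtain ⟨V, hV, rfl⟩ := h
  obtain ⟨V', hV', rfl⟩ := h'
  have hne : (Nat.card G : ℂ) ≠ 0 := NeZero.ne _
  have := invertibleOfNonzero hne
  split_ifs with hh
  · rw [← hh]
    exact (FDRep.simple_iff_char_is_norm_one V).1 hV
  · have h1 := FDRep.char_orthonormal V V'
    rw [if_neg (fun ⟨i⟩ => hh (FDRep.char_iso i))] at h1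
    exact (mul_eq_zero.1 h1).resolve_left (inv_ne_zero hne)

lemma aux_charMul {G : Type} [Group G] [Fintype G] (N : Subgroup G) [N.Normal]
    (χ : (G ⧸ N) →* ℂˣ) {ρ : G → ℂ} (h : IsIrrChar G ρ) : IsIrrChar G (charMul N χ ρ) := by
  obtain ⟨V, hV, rfl⟩ := h
  let r : Representation ℂ G V :=
    { toFun := fun g => (χ (g : G ⧸ N) : ℂ) • V.ρ g
      map_one' := by simp
      map_mul' := fun a b => by simp [smul_smul, mul_comm] }
  have hr : (FDRep.of r).character = charMul N χ V.character := by
    funext g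
    change LinearMap.trace ℂ V ((χ (g : G ⧸ N) : ℂ) • V.ρ g) = _
    rw [map_smul]; rfl
  refine ⟨FDRep.of r, ?_, hr.symm⟩
  rw [FDRep.simple_iff_char_is_norm_one, hr, ← (FDRep.simple_iff_char_is_norm_one V).1 hV]
  refine Finset.sum_congr rfl fun g _ => ?_
  have : (χ (g : G ⧸ N) : ℂ) * (χ ((g⁻¹ : G) : G ⧸ N) : ℂ) = 1 := by
    rw [← Units.val_mul, ← map_mul, ← QuotientGroup.mk_mul]; simp
  simp only [charMul]
  linear_combination (V.character g * V.character g⁻¹) * this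

lemma aux_finite {G : Type} [Group G] [Fintype G] (U : Set (G → ℂ))
    (hU : ∀ ρ ∈ U, IsIrrChar G ρ) : U.Finite := by
  classical
  have : LinearIndependent ℂ (fun ρ : U => (ρ : G → ℂ)) := by
    rw [linearIndependent_iff']
    intro s c hc i hi
    have h1 : ∑ g, (∑ ρ ∈ s, c ρ • (ρ : G → ℂ)) g * (starRingEnd ℂ) ((i : G → ℂ) g) = 0 := by
      rw [hc]; simp
    simp only [Finset.sum_apply, Pi.smul_apply, smul_eq_mul, Finset.sum_mul] at h1
    rw [Finset.sum_comm] at h1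
    simp_rw [mul_assoc, ← Finset.mul_sum] at h1
    rw [Finset.sum_congr rfl (fun ρ _ => by
      rw [aux_orth (hU ρ ρ.2) (hU i i.2)])] at h1
    have hne : (Nat.card G : ℂ) ≠ 0 := NeZero.ne _
    simp only [SetCoe.ext_iff, mul_ite, mul_zero, Finset.sum_ite_eq', hi, if_true] at h1
    exact (mul_eq_zero.1 h1).resolve_right hne
  have : Finite U := this.finite
  exact Set.toFinite U

open scoped Classical in
lemma aux_dual {A : Type} [CommGroup A] [Finite A] [Fintype (A →* ℂˣ)] (a : A) :
    ∑ χ : A →* ℂˣ, (χ a : ℂ) = if a = 1 then (Nat.card A : ℂ) else 0 := by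
  split_ifs with h
  · subst h
    simp [← CommGroup.card_monoidHom_of_hasEnoughRootsOfUnity A ℂ]
  · obtain ⟨φ, hφ⟩ := CommGroup.exists_apply_ne_one_of_hasEnoughRootsOfUnity A ℂ h
    have h1 : (φ a : ℂ) * ∑ χ : A →* ℂˣ, (χ a : ℂ) = ∑ χ : A →* ℂˣ, (χ a : ℂ) := by
      rw [Finset.mul_sum, ← Equiv.sum_comp (Equiv.mulLeft φ) (fun χ : A →* ℂˣ => (χ a : ℂ))]
      simp
    have h2 : ((φ a : ℂ) - 1) * ∑ χ : A →* ℂˣ, (χ a : ℂ) = 0 := by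
      rw [sub_mul, h1]; ring
    refine (mul_eq_zero.1 h2).resolve_left ?_
    intro h3
    exact hφ (Units.ext (sub_eq_zero.1 h3))

open scoped Classical in
lemma aux_key {G : Type} [Group G] [Fintype G] (N : Subgroup G) [N.Normal]
    (hcomm : ∀ a b : G ⧸ N, a * b = b * a) [Fintype ((G ⧸ N) →* ℂˣ)]
    {ρ ρ' : G → ℂ} (h : IsIrrChar G ρ) (h' : IsIrrChar G ρ') (x : G) :
    ∑ g, (if g ∈ coset N x then (starRingEnd ℂ) (ρ g) * ρ' g else 0) =
      (Nat.card N : ℂ) * ∑ χ : (G ⧸ N) →* ℂˣ,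
        if charMul N χ ρ' = ρ then (χ ((x : G ⧸ N)⁻¹) : ℂ) else 0 := by
  letI : CommGroup (G ⧸ N) := { (inferInstance : Group (G ⧸ N)) with mul_comm := hcomm }
  have hQ : (Nat.card (G ⧸ N) : ℂ) ≠ 0 := NeZero.ne _
  have hG : (Nat.card G : ℂ) = (Nat.card (G ⧸ N) : ℂ) * (Nat.card N : ℂ) := by
    rw [N.card_eq_card_quotient_mul_card_subgroup]; push_cast; ring
  apply mul_left_cancel₀ hQ
  rw [← mul_assoc, ← hG, Finset.mul_sum, Finset.mul_sum]
  have h1 : ∀ χ : (G ⧸ N) →* ℂˣ,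
      (Nat.card G : ℂ) * (if charMul N χ ρ' = ρ then (χ ((x : G ⧸ N)⁻¹) : ℂ) else 0) =
      ∑ g : G, (χ ((g : G ⧸ N) * (x : G ⧸ N)⁻¹) : ℂ) * ((starRingEnd ℂ) (ρ g) * ρ' g) := by
    intro χ
    have := aux_orth (aux_charMul N χ h') h
    calc _ = (χ ((x : G ⧸ N)⁻¹) : ℂ) * (if charMul N χ ρ' = ρ then (Nat.card G : ℂ) else 0) := by
          split_ifs <;> ring
      _ = _ := by
          rw [← this, Finset.mul_sum]
          refine Finset.sum_congr rfl fun g _ => ?_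
          rw [map_mul, Units.val_mul]
          simp only [charMul]; ring
  rw [Finset.sum_congr rfl (fun χ _ => h1 χ), Finset.sum_comm]
  refine Finset.sum_congr rfl fun g _ => ?_
  have h2 := aux_dual ((g : G ⧸ N) * (x : G ⧸ N)⁻¹)
  rw [← Finset.sum_mul, h2]
  simp only [mul_inv_eq_one, coset, Set.mem_setOf_eq]
  split_ifs <;> simp

/-- (Inversion formula.) With `G ⧸ N` cyclic generated by `qN`, `U` a set
of orbit representatives, `Θ = ∑_{ρ ∈ U} Ψ_ρ ⊗ ρ` a character with each `Ψ_ρ` zero or a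
character trivial on `N`, and `m ρ = ⟨Res_N ρ, Res_N ρ⟩`, one has for every `ρ ∈ U`,
`d ≥ 0`: `Ψ_ρ(q^{d·m_ρ}) = (1/(#N·m_ρ)) ∑_{g ∈ q^{d·m_ρ}N} conj(ρ(g)) Θ(g)`. -/
theorem inversion_formula
    (G : Type) [Group G] [Fintype G] (N : Subgroup G) [N.Normal] (q : G)
    (hgen : ∀ x : G ⧸ N, x ∈ Subgroup.zpowers ((q : G ⧸ N)))
    (U : Set (G → ℂ))
    (hU1 : ∀ ρ ∈ U, IsIrrChar G ρ)
    (hU2 : ∀ ρ ∈ U, ∀ ρ' ∈ U, qhatOrbit N ρ = qhatOrbit N ρ' → ρ = ρ')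
    (hU3 : ∀ ρ : G → ℂ, IsIrrChar G ρ → ∃ ρ' ∈ U, ρ ∈ qhatOrbit N ρ')
    (Θ : G → ℂ) (hΘ : IsChar G Θ)
    (Ψ : (G → ℂ) → (G → ℂ))
    (hΨ : ∀ ρ ∈ U, Ψ ρ = 0 ∨
      ∃ W : FDRep ℂ G, Ψ ρ = W.character ∧ ∀ n ∈ N, W.ρ n = 1)
    (hdecomp : ∀ g : G, Θ g = ∑ᶠ ρ ∈ U, Ψ ρ g * ρ g)
    (m : (G → ℂ) → ℕ)
    (hm : ∀ ρ ∈ U, (m ρ : ℂ) =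
      (Nat.card ↥N : ℂ)⁻¹ * ∑ᶠ n ∈ (N : Set G), ρ n * (starRingEnd ℂ) (ρ n)) :
    ∀ ρ ∈ U, ∀ d : ℕ,
      Ψ ρ (q ^ (d * m ρ)) =
        ((Nat.card ↥N : ℂ) * (m ρ : ℂ))⁻¹ *
          ∑ᶠ g ∈ coset N (q ^ (d * m ρ)), (starRingEnd ℂ) (ρ g) * Θ g := by
  classical
  intro ρ hρ d
  have hcomm : ∀ a b : G ⧸ N, a * b = b * a := by
    intro a b
    obtain ⟨i, rfl⟩ := hgen a
    obtain ⟨j, rfl⟩ := hgen b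
    exact ((Commute.refl (q : G ⧸ N)).zpow_zpow i j).eq
  have hfinhom : Finite ((G ⧸ N) →* ℂˣ) := by
    letI : CommGroup (G ⧸ N) := { (inferInstance : Group (G ⧸ N)) with mul_comm := hcomm }
    exact Nat.finite_of_card_ne_zero
      (by rw [CommGroup.card_monoidHom_of_hasEnoughRootsOfUnity]; exact Nat.card_pos.ne')
  letI : Fintype ((G ⧸ N) →* ℂˣ) := Fintype.ofFinite _
  have hUf := aux_finite U hU1
  have hN : (Nat.card N : ℂ) ≠ 0 := NeZero.ne _
  let S : Subgroup ((G ⧸ N) →* ℂˣ) :=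
    { carrier := {χ | charMul N χ ρ = ρ}
      one_mem' := by funext g; simp [charMul]
      mul_mem' := by
        intro a b ha hb
        funext g
        have h1 := congrFun ha g
        have h2 := congrFun hb g
        simp only [charMul] at h1 h2 ⊢
        rw [MonoidHom.mul_apply, Units.val_mul, mul_assoc, h2, h1]
      inv_mem' := by
        intro a ha
        funext g
        have h1 := congrFun ha g
        simp only [charMul] at h1 ⊢
        conv_lhs => rw [← h1]
        rw [← mul_assoc, ← Units.val_mul]
        simp }
  have hfs : ∀ (s : Set G) (f : G → ℂ), ∑ᶠ g ∈ s, f g = ∑ g, if g ∈ s then f g else 0 := by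
    intro s f
    rw [finsum_eq_sum_of_fintype]
    refine Finset.sum_congr rfl fun g _ => ?_
    rw [finsum_eq_if]
  have hmS : m ρ = Nat.card S := by
    have h1 := hm ρ hρ
    have h2 := aux_key N hcomm (hU1 ρ hρ) (hU1 ρ hρ) 1
    have h3 : ∑ᶠ n ∈ (N : Set G), ρ n * (starRingEnd ℂ) (ρ n) =
        ∑ g, (if g ∈ coset N 1 then (starRingEnd ℂ) (ρ g) * ρ g else 0) := by
      rw [hfs]
      refine Finset.sum_congr rfl fun g _ => ?_
      have : g ∈ coset N 1 ↔ g ∈ (N : Set G) := by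
        simp [coset]
      simp only [this, mul_comm]
    rw [h3, h2, ← mul_assoc, inv_mul_cancel₀ hN, one_mul] at h1
    have h4 : Nat.card S = (Finset.univ.filter (fun χ => charMul N χ ρ = ρ)).card := by
      rw [← Fintype.card_subtype, ← Nat.card_eq_fintype_card]; rfl
    rw [← Finset.sum_filter] at h1
    simp at h1
    rw [h4]
    exact_mod_cast h1
  have hm0 : (m ρ : ℂ) ≠ 0 := by
    rw [hmS]; exact_mod_cast Nat.card_pos.ne'
  set x := q ^ (d * m ρ) with hx
  have hdiag : ∑ g, (if g ∈ coset N x then (starRingEnd ℂ) (ρ g) * ρ g else 0) =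
      (Nat.card N : ℂ) * m ρ := by
    rw [aux_key N hcomm (hU1 ρ hρ) (hU1 ρ hρ) x]
    congr 1
    have h4 : Nat.card S = (Finset.univ.filter (fun χ => charMul N χ ρ = ρ)).card := by
      rw [← Fintype.card_subtype, ← Nat.card_eq_fintype_card]; rfl
    rw [← Finset.sum_filter, hmS, h4, Finset.cast_card]
    refine Finset.sum_congr rfl fun χ hχ => ?_
    have hχS : χ ∈ S := (Finset.mem_filter.1 hχ).2
    have h5 : χ ^ (m ρ) = 1 := by
      rw [hmS]
      have := pow_card_eq_one' (x := (⟨χ, hχS⟩ : S))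
      exact congrArg Subtype.val this
    have h6 : χ (x : G ⧸ N) = 1 := by
      rw [hx, QuotientGroup.mk_pow, map_pow, mul_comm, pow_mul, ← MonoidHom.pow_apply, h5]
      simp
    rw [map_inv, h6]; simp
  have hoff : ∀ ρ' ∈ U, ρ' ≠ ρ →
      ∑ g, (if g ∈ coset N x then (starRingEnd ℂ) (ρ g) * ρ' g else 0) = 0 := by
    intro ρ' hρ' hne
    rw [aux_key N hcomm (hU1 ρ hρ) (hU1 ρ' hρ') x]
    rw [Finset.sum_eq_zero, mul_zero]
    intro χ _
    rw [if_neg]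
    intro hχ
    apply hne
    apply hU2 ρ' hρ' ρ hρ
    ext f
    constructor
    · rintro ⟨ψ, rfl⟩
      refine ⟨ψ * χ⁻¹, ?_⟩
      rw [← hχ]
      funext g
      have : (χ (g : G ⧸ N) : ℂ) ≠ 0 := Units.ne_zero _
      simp only [charMul, MonoidHom.mul_apply, MonoidHom.inv_apply, Units.val_mul,
        Units.val_inv_eq_inv_val]
      field_simp
    · rintro ⟨ψ, rfl⟩
      refine ⟨ψ * χ, ?_⟩
      rw [← hχ]
      funext g
      simp [charMul, mul_assoc]
  have hconst : ∀ ρ' ∈ U, ∀ g ∈ coset N x, Ψ ρ' g = Ψ ρ' x := by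
    intro ρ' hρ' g hg
    rcases hΨ ρ' hρ' with h | ⟨W, hW, hW1⟩
    · rw [h]; rfl
    · rw [hW]
      have hn : x⁻¹ * g ∈ N := QuotientGroup.eq.1 (Eq.symm hg)
      have : W.ρ g = W.ρ x := by
        have h1 : g = x * (x⁻¹ * g) := by group
        rw [h1, map_mul, hW1 _ hn, mul_one]
      simp only [FDRep.character, this]
  have hΘ' : ∀ g, Θ g = ∑ ρ' ∈ hUf.toFinset, Ψ ρ' g * ρ' g := by
    intro g
    rw [hdecomp, finsum_mem_eq_finite_toFinset_sum _ hUf]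
  have hmain : ∑ᶠ g ∈ coset N x, (starRingEnd ℂ) (ρ g) * Θ g =
      ((Nat.card ↥N : ℂ) * (m ρ : ℂ)) * Ψ ρ x := by
    rw [hfs]
    calc _ = ∑ g, ∑ ρ' ∈ hUf.toFinset, Ψ ρ' x *
          (if g ∈ coset N x then (starRingEnd ℂ) (ρ g) * ρ' g else 0) := by
          refine Finset.sum_congr rfl fun g _ => ?_
          split_ifs with hg
          · rw [hΘ', Finset.mul_sum]
            refine Finset.sum_congr rfl fun ρ' hρ' => ?_
            rw [hconst ρ' (hUf.mem_toFinset.1 hρ') g hg]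
            ring
          · simp
      _ = ∑ ρ' ∈ hUf.toFinset, Ψ ρ' x *
          ∑ g, (if g ∈ coset N x then (starRingEnd ℂ) (ρ g) * ρ' g else 0) := by
          rw [Finset.sum_comm]
          simp_rw [Finset.mul_sum]
      _ = Ψ ρ x * ((Nat.card N : ℂ) * m ρ) := by
          rw [Finset.sum_eq_single ρ]
          · rw [hdiag]
          · intro ρ' hρ' hne
            rw [hoff ρ' (hUf.mem_toFinset.1 hρ') hne, mul_zero]
          · intro h
            exact absurd (hUf.mem_toFinset.2 hρ) h
      _ = _ := by ring
  rw [hmain, ← mul_assoc, inv_mul_cancel₀ (mul_ne_zero hN hm0), one_mul]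
end
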